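/- arXiv:2206.01654 — 2 statements merged into one kernel-verified Lean document; each statement's English description precedes it below -/
import Mathlib

section
/- Let c : Ω → [0,∞] be 𝒜-measurable, P* ∈ ℙ, and K_1 = {P ∈ M : P ≪ P*}. Then K_1 is compact, and if K_1 ≠ ∅ there exists P ∈ K_1 such that P(c) = inf_{Q ∈ K_1} Q(c). -/
open MeasureTheory Set ENNReal

namespace FATransport

variable {α : Type*} [MeasurableSpace α]

/-- The collection of measurable sets of `α` (the σ-field `𝒜`), as a type. -/
abbrev MSet (α : Type*) [MeasurableSpace α] := {A : Set α // MeasurableSet A}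

/-- A finitely additive probability on the σ-field of `α`, viewed as an element
of `[0,1]^𝒜`: it maps the whole space to `1` and is additive on disjoint pairs. -/
def IsFAP (P : MSet α → unitInterval) : Prop :=
  (P ⟨Set.univ, MeasurableSet.univ⟩ : ℝ) = 1 ∧
    ∀ A B : MSet α, Disjoint A.1 B.1 →
      (P ⟨A.1 ∪ B.1, A.2.union B.2⟩ : ℝ) = (P A : ℝ) + (P B : ℝ)

/-- `ℙ`, the set of all finitely additive probabilities on `𝒜`, as a subset of
`[0,1]^𝒜` (with its product topology). -/
def FAPs (α : Type*) [MeasurableSpace α] : Set (MSet α → unitInterval) :=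
  {P | IsFAP P}

/-- Integral of a simple function with respect to a finitely additive set function. -/
noncomputable def simpleInt (P : MSet α → unitInterval) (s : SimpleFunc α ℝ) : ℝ :=
  ∑ y ∈ s.range, y * (P ⟨(⇑s) ⁻¹' {y}, s.measurableSet_fiber y⟩ : ℝ)

/-- `P(f)` for a bounded measurable `f : α → ℝ`: the supremum of the integrals of
simple functions below `f` (for a f.a.p. `P` and bounded measurable `f` this agrees
with the integral defined by uniform approximation by simple functions). -/
noncomputable def fapInt (P : MSet α → unitInterval) (f : α → ℝ) : ℝ :=
  sSup (simpleInt P '' {s : SimpleFunc α ℝ | ∀ x, s x ≤ f x})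

/-- `P(c) = sup_k P(c ∧ k)` for a `[0,∞]`-valued `c`. -/
noncomputable def fapIntTop (P : MSet α → unitInterval) (c : α → ℝ≥0∞) : ℝ≥0∞ :=
  ⨆ k : ℕ, ENNReal.ofReal (fapInt P (fun x => (c x ⊓ (k : ℝ≥0∞)).toReal))

/-- A real-valued `f` is `P`-integrable iff `P(|f|) < ∞`. -/
def FapIntegrable (P : MSet α → unitInterval) (f : α → ℝ) : Prop :=
  fapIntTop P (fun x => ENNReal.ofReal |f x|) < ⊤

/-- `P(f) = P(f⁺) - P(f⁻)` for a (`P`-integrable) real-valued `f`. -/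
noncomputable def fapIntR (P : MSet α → unitInterval) (f : α → ℝ) : ℝ :=
  (fapIntTop P (fun x => ENNReal.ofReal (f x))).toReal -
    (fapIntTop P (fun x => ENNReal.ofReal (-f x))).toReal

/-- `P ≪ Q` for finitely additive probabilities. -/
def FapAC (P Q : MSet α → unitInterval) : Prop :=
  ∀ A : MSet α, (Q A : ℝ) = 0 → (P A : ℝ) = 0

variable {n : ℕ} {Ω : Fin n → Type*} [∀ i, MeasurableSpace (Ω i)]

/-- `M`, the set of finitely additive probabilities on `𝒜 = ⊗ᵢ 𝒜ᵢ` whose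
`i`-th marginal is `μ i` for every `i`. -/
def couplings (μ : ∀ i, Measure (Ω i)) : Set (MSet (∀ i, Ω i) → unitInterval) :=
  {P | IsFAP P ∧ ∀ (i : Fin n) (B : Set (Ω i)) (hB : MeasurableSet B),
    (P ⟨(fun ω => ω i) ⁻¹' B, (measurable_pi_apply i) hB⟩ : ℝ) = (μ i B).toReal}

end FATransport

namespace FATransport

section Aux

variable {α : Type*} [MeasurableSpace α]

theorem IsFAP.empty {P : MSet α → unitInterval} (hP : IsFAP P) :
    (P ⟨∅, MeasurableSet.empty⟩ : ℝ) = 0 := by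
  have h := hP.2 ⟨∅, MeasurableSet.empty⟩ ⟨∅, MeasurableSet.empty⟩ (by simp)
  simp only [Set.union_self] at h
  linarith

theorem IsFAP.sum_fiber {P : MSet α → unitInterval} (hP : IsFAP P) (s : SimpleFunc α ℝ)
    (t : Finset ℝ) :
    ∑ y ∈ t, (P ⟨(⇑s) ⁻¹' {y}, s.measurableSet_fiber y⟩ : ℝ) =
      (P ⟨(⇑s) ⁻¹' (t : Set ℝ), s.measurableSet_preimage _⟩ : ℝ) := by
  classical
  induction t using Finset.induction_on with
  | empty =>
    have := hP.empty
    simpa using this.symm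
  | insert a t ha ih =>
    rw [Finset.sum_insert ha, ih]
    rw [← hP.2 ⟨(⇑s) ⁻¹' {a}, s.measurableSet_fiber a⟩
      ⟨(⇑s) ⁻¹' (t : Set ℝ), s.measurableSet_preimage _⟩]
    · congr 3
      ext x
      simp
    · rw [Set.disjoint_left]
      intro x hx hx2
      simp only [Set.mem_preimage, Set.mem_singleton_iff, Finset.mem_coe] at hx hx2
      exact ha (hx ▸ hx2)

theorem IsFAP.simpleInt_le {P : MSet α → unitInterval} (hP : IsFAP P) (s : SimpleFunc α ℝ)
    (k : ℝ) (hk : ∀ x, s x ≤ k) : simpleInt P s ≤ k := by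
  have h1 : ∑ y ∈ s.range, (P ⟨(⇑s) ⁻¹' {y}, s.measurableSet_fiber y⟩ : ℝ) = 1 := by
    rw [hP.sum_fiber, ← hP.1]
    congr 3
    ext x
    simp
  calc simpleInt P s
      ≤ ∑ y ∈ s.range, k * (P ⟨(⇑s) ⁻¹' {y}, s.measurableSet_fiber y⟩ : ℝ) := by
        refine Finset.sum_le_sum fun y hy => ?_
        obtain ⟨x, rfl⟩ := SimpleFunc.mem_range.1 hy
        exact mul_le_mul_of_nonneg_right (hk x) (P _).2.1
    _ = k := by rw [← Finset.mul_sum, h1, mul_one]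

theorem continuous_eval (A : MSet α) :
    Continuous fun P : MSet α → unitInterval => (P A : ℝ) :=
  continuous_subtype_val.comp (continuous_apply A)

theorem continuous_simpleInt (s : SimpleFunc α ℝ) :
    Continuous fun P : MSet α → unitInterval => simpleInt P s := by
  unfold simpleInt
  exact continuous_finsetSum _ fun y _ => continuous_const.mul (continuous_eval _)

theorem isClosed_isFAP : IsClosed {P : MSet α → unitInterval | IsFAP P} := by
  unfold IsFAP
  simp only [Set.ofPred_and, Set.ofPred_forall]
  refine (isClosed_eq (continuous_eval _) continuous_const).inter ?_
  refine isClosed_iInter fun A => isClosed_iInter fun B => isClosed_iInter fun _ => ?_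
  exact isClosed_eq (continuous_eval _) ((continuous_eval _).add (continuous_eval _))

theorem lsc_fapIntTop (c : α → ℝ≥0∞) :
    LowerSemicontinuousOn (fun P : MSet α → unitInterval => fapIntTop P c) {P | IsFAP P} := by
  intro P hP y hy
  obtain ⟨k, hk⟩ := lt_iSup_iff.1 hy
  have hy' : y ≠ ⊤ := ne_top_of_lt hk
  have hk' : y.toReal < fapInt P (fun x => (c x ⊓ (k : ℝ≥0∞)).toReal) :=
    (ENNReal.lt_ofReal_iff_toReal_lt hy').1 hk
  obtain ⟨_, ⟨s, hs, rfl⟩, hlt⟩ := exists_lt_of_lt_csSup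
    (Set.Nonempty.image _ ⟨(SimpleFunc.const α 0 : SimpleFunc α ℝ), by
      intro x
      simp⟩) hk'
  have hev : ∀ᶠ Q in nhdsWithin P {P | IsFAP P}, y.toReal < simpleInt Q s :=
    nhdsWithin_le_nhds ((continuous_simpleInt s).continuousAt.eventually_const_lt hlt)
  filter_upwards [hev, self_mem_nhdsWithin] with Q hQ hQF
  refine lt_of_lt_of_le ?_ (le_iSup _ k)
  rw [ENNReal.lt_ofReal_iff_toReal_lt hy']
  refine hQ.trans_le (le_csSup ⟨(k : ℝ), ?_⟩ ⟨s, hs, rfl⟩)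
  rintro _ ⟨t, ht, rfl⟩
  refine IsFAP.simpleInt_le hQF t k fun x => (ht x).trans ?_
  have : (c x ⊓ (k : ℝ≥0∞)).toReal ≤ (k : ℝ≥0∞).toReal :=
    ENNReal.toReal_mono (by simp) inf_le_right
  simpa using this

end Aux

/-- for `P* ∈ ℙ`, the set `K₁ = {P ∈ M : P ≪ P*}` is compact; and if
`K₁ ≠ ∅` there is `P ∈ K₁` with `P(c) = inf_{Q ∈ K₁} Q(c)`. -/
theorem K1_compact_and_min
    {n : ℕ} (hn : 0 < n) {Ω : Fin n → Type*} [∀ i, MeasurableSpace (Ω i)]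
    (μ : ∀ i, Measure (Ω i)) [∀ i, IsProbabilityMeasure (μ i)]
    (c : (∀ i, Ω i) → ℝ≥0∞) (hc : Measurable c)
    (Pstar : MSet (∀ i, Ω i) → unitInterval) (hPstar : IsFAP Pstar) :
    IsCompact {P ∈ couplings μ | FapAC P Pstar} ∧
      (({P ∈ couplings μ | FapAC P Pstar}).Nonempty →
        ∃ P ∈ {P ∈ couplings μ | FapAC P Pstar},
          fapIntTop P c = ⨅ Q ∈ {P ∈ couplings μ | FapAC P Pstar}, fapIntTop Q c) := by
  have hcomp : IsCompact {P ∈ couplings μ | FapAC P Pstar} := by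
    apply IsClosed.isCompact
    have h0 : IsClosed {P : MSet (∀ i, Ω i) → unitInterval |
        ∀ (i : Fin n) (B : Set (Ω i)) (hB : MeasurableSet B),
          (P ⟨(fun ω => ω i) ⁻¹' B, (measurable_pi_apply i) hB⟩ : ℝ) = (μ i B).toReal} := by
      simp only [Set.ofPred_forall]
      exact isClosed_iInter fun i => isClosed_iInter fun B => isClosed_iInter fun hB =>
        isClosed_eq (continuous_eval _) continuous_const
    have h1 : IsClosed (couplings μ) := isClosed_isFAP.inter h0
    have h2 : IsClosed {P : MSet (∀ i, Ω i) → unitInterval | FapAC P Pstar} := by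
      unfold FapAC
      simp only [Set.ofPred_forall]
      exact isClosed_iInter fun A => isClosed_iInter fun _ =>
        isClosed_eq (continuous_eval _) continuous_const
    exact h1.inter h2
  refine ⟨hcomp, fun hne => ?_⟩
  have hl : LowerSemicontinuousOn (fun P => fapIntTop P c) {P ∈ couplings μ | FapAC P Pstar} :=
    (lsc_fapIntTop c).mono fun P hP => hP.1.1
  obtain ⟨P, hP, hmin⟩ := hl.exists_isMinOn hne hcomp
  exact ⟨P, hP, le_antisymm (le_iInf₂ fun Q hQ => hmin hQ) (iInf₂_le P hP)⟩

end FATransport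
end

section
/- Let P* ∈ ℙ and 𝒰 = {Q ∈ ℙ : Q ≪ P*}. Then M ∩ 𝒰 ≠ ∅ if and only if Σ_{i=1}^n μ_i(f_i) ≥ inf_{Q ∈ 𝒰} Q(⊕_{i=1}^n f_i) whenever f_i is a bounded 𝒜_i-measurable real function for each i = 1,…,n (with the convention inf ∅ = ∞). -/
open MeasureTheory Set ENNReal

namespace FATransport

variable {n : ℕ} {Ω : Fin n → Type*} [∀ i, MeasurableSpace (Ω i)]

/-- Condition (4.1) of the paper: `Σᵢ μᵢ(fᵢ) ≥ inf_{Q ∈ 𝒰} Q(⊕ᵢ fᵢ)` for all bounded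
measurable `fᵢ : Ωᵢ → ℝ`. The infimum is taken in `EReal`, so that `inf ∅ = ∞` (and
the condition fails when `𝒰 = ∅`). -/
def DualCond (μ : ∀ i, Measure (Ω i))
    (U : Set (MSet (∀ i, Ω i) → unitInterval)) : Prop :=
  ∀ f : ∀ i, Ω i → ℝ, (∀ i, Measurable (f i)) → (∀ i, ∃ C, ∀ x, |f i x| ≤ C) →
    (⨅ Q ∈ U, ((fapInt Q (fun ω => ∑ i, f i (ω i)) : ℝ) : EReal)) ≤
      ((∑ i, ∫ x, f i x ∂(μ i) : ℝ) : EReal)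

end FATransport

namespace FATransport

section helpers

variable {α : Type*} [MeasurableSpace α]

open Classical in
/-- auxiliary operator-valued set function attached to `P` -/
noncomputable def auxT (P : MSet α → unitInterval) (A : Set α) : ℝ →L[ℝ] ℝ :=
  if h : MeasurableSet A then (P ⟨A, h⟩ : ℝ) • ContinuousLinearMap.id ℝ ℝ else 0

theorem simpleInt_eq (P : MSet α → unitInterval) (s : SimpleFunc α ℝ) :
    simpleInt P s = SimpleFunc.setToSimpleFunc (auxT P) s := by
  unfold simpleInt SimpleFunc.setToSimpleFunc
  refine Finset.sum_congr rfl fun y _ => ?_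
  rw [auxT, dif_pos (s.measurableSet_fiber y)]
  simp [mul_comm]

theorem auxT_add {P : MSet α → unitInterval} (hP : IsFAP P) :
    FinMeasAdditive (0 : Measure α) (auxT P) := by
  intro A B hA hB _ _ hd
  have := hP.2 ⟨A, hA⟩ ⟨B, hB⟩ hd
  simp only at this
  rw [auxT, auxT, auxT, dif_pos hA, dif_pos hB, dif_pos (hA.union hB), this, add_smul]

theorem simpleInt_add {P : MSet α → unitInterval} (hP : IsFAP P) (s t : SimpleFunc α ℝ) :
    simpleInt P (s + t) = simpleInt P s + simpleInt P t := by
  simp only [simpleInt_eq]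
  exact SimpleFunc.setToSimpleFunc_add _ (auxT_add hP) integrable_zero_measure
    integrable_zero_measure

theorem simpleInt_sub {P : MSet α → unitInterval} (hP : IsFAP P) (s t : SimpleFunc α ℝ) :
    simpleInt P (s - t) = simpleInt P s - simpleInt P t := by
  simp only [simpleInt_eq]
  exact SimpleFunc.setToSimpleFunc_sub _ (auxT_add hP) integrable_zero_measure
    integrable_zero_measure

theorem simpleInt_zero (P : MSet α → unitInterval) :
    simpleInt P (0 : SimpleFunc α ℝ) = 0 := by
  rw [simpleInt_eq]
  exact SimpleFunc.setToSimpleFunc_zero_apply _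

theorem simpleInt_sum {P : MSet α → unitInterval} (hP : IsFAP P) {ι : Type*} (F : Finset ι)
    (s : ι → SimpleFunc α ℝ) :
    simpleInt P (∑ i ∈ F, s i) = ∑ i ∈ F, simpleInt P (s i) := by
  classical
  induction F using Finset.induction_on with
  | empty => simpa using simpleInt_zero P
  | insert a F ha ih => rw [Finset.sum_insert ha, Finset.sum_insert ha, simpleInt_add hP, ih]

theorem sf_sum_apply {ι : Type*} (F : Finset ι) (s : ι → SimpleFunc α ℝ) (x : α) :
    (∑ i ∈ F, s i) x = ∑ i ∈ F, s i x :=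
  map_sum (⟨⟨fun s => s x, rfl⟩, fun _ _ => rfl⟩ : SimpleFunc α ℝ →+ ℝ) s F

theorem fap_mono {P : MSet α → unitInterval} (hP : IsFAP P) (A B : MSet α) (h : A.1 ⊆ B.1) :
    (P A : ℝ) ≤ P B := by
  have h1 := hP.2 A ⟨B.1 \ A.1, B.2.diff A.2⟩ disjoint_sdiff_self_right
  have h2 : (⟨A.1 ∪ (B.1 \ A.1), A.2.union (B.2.diff A.2)⟩ : MSet α) = B :=
    Subtype.ext (union_diff_cancel h)
  simp only at h1
  rw [h2] at h1
  have := (P ⟨B.1 \ A.1, B.2.diff A.2⟩).2.1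
  linarith

theorem fap_empty {P : MSet α → unitInterval} (hP : IsFAP P) (A : MSet α) (h : A.1 = ∅) :
    (P A : ℝ) = 0 := by
  have h1 := hP.2 A A (by rw [h]; exact disjoint_bot_left)
  have h2 : (⟨A.1 ∪ A.1, A.2.union A.2⟩ : MSet α) = A := Subtype.ext (union_self _)
  rw [h2] at h1
  linarith

theorem neg_meas (s : SimpleFunc α ℝ) : MeasurableSet {x | s x < 0} :=
  measurableSet_lt s.measurable measurable_const

theorem simpleInt_nonneg {P : MSet α → unitInterval} (hP : IsFAP P) (s : SimpleFunc α ℝ)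
    (h : (P ⟨{x | s x < 0}, neg_meas s⟩ : ℝ) = 0) : 0 ≤ simpleInt P s := by
  refine Finset.sum_nonneg fun y _ => ?_
  rcases le_or_gt 0 y with hy | hy
  · exact mul_nonneg hy (P _).2.1
  · have : (P ⟨(⇑s) ⁻¹' {y}, s.measurableSet_fiber y⟩ : ℝ) ≤ 0 := by
      rw [← h]
      refine fap_mono hP _ _ ?_
      intro x hx
      have : s x = y := hx
      simpa [this] using hy
    have h0 := le_antisymm this (P _).2.1
    rw [h0, mul_zero]

theorem simpleInt_mono {P : MSet α → unitInterval} (hP : IsFAP P) (s t : SimpleFunc α ℝ)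
    (h : ∀ x, s x ≤ t x) : simpleInt P s ≤ simpleInt P t := by
  have := simpleInt_nonneg hP (t - s) (fap_empty hP _ (by
    ext x
    simpa using h x))
  rw [simpleInt_sub hP] at this
  linarith

theorem le_fapInt {P : MSet α → unitInterval} (hP : IsFAP P) (s : SimpleFunc α ℝ) :
    simpleInt P s ≤ fapInt P s := by
  refine le_csSup ⟨simpleInt P s, ?_⟩ ⟨s, fun _ => le_rfl, rfl⟩
  rintro _ ⟨t, ht, rfl⟩
  exact simpleInt_mono hP t s ht

theorem fapInt_le {P : MSet α → unitInterval} (hP : IsFAP P) {f : α → ℝ} {C : ℝ}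
    (hf : ∀ x, -C ≤ f x) (t : SimpleFunc α ℝ) (ht : ∀ x, f x ≤ t x) :
    fapInt P f ≤ simpleInt P t := by
  refine csSup_le ⟨_, SimpleFunc.const α (-C), hf, rfl⟩ ?_
  rintro _ ⟨s, hs, rfl⟩
  exact simpleInt_mono hP s t fun x => (hs x).trans (ht x)

theorem exists_upper (f : α → ℝ) (hf : Measurable f) (hb : ∃ C, ∀ x, |f x| ≤ C)
    (ε : ℝ) (hε : 0 < ε) : ∃ g : SimpleFunc α ℝ, ∀ x, f x ≤ g x ∧ g x ≤ f x + ε := by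
  obtain ⟨C, hC⟩ := hb
  have hm : Measurable fun x => ε * (⌈f x / ε⌉ : ℝ) := by fun_prop
  refine ⟨⟨fun x => ε * (⌈f x / ε⌉ : ℝ), fun y => hm (measurableSet_singleton y), ?_⟩, ?_⟩
  · refine ((Set.finite_Icc ⌈(-C) / ε⌉ ⌈C / ε⌉).image fun k : ℤ => ε * (k : ℝ)).subset ?_
    rintro _ ⟨x, rfl⟩
    refine ⟨⌈f x / ε⌉, ⟨?_, ?_⟩, rfl⟩
    · have := (abs_le.1 (hC x)).1
      gcongr
    · have := (abs_le.1 (hC x)).2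
      gcongr
  · intro x
    have h1 := Int.le_ceil (f x / ε)
    have h2 := Int.ceil_lt_add_one (f x / ε)
    have h3 : ε * (f x / ε) = f x := by field_simp
    simp only [SimpleFunc.coe_mk]
    constructor
    · nlinarith
    · nlinarith

theorem sf_integrable (μ : Measure α) [IsFiniteMeasure μ] (s : SimpleFunc α ℝ) :
    Integrable s μ := s.integrable_of_isFiniteMeasure

open Classical in
/-- indicator as a simple function -/
noncomputable def ind (A : MSet α) : SimpleFunc α ℝ :=
  SimpleFunc.piecewise A.1 A.2 (SimpleFunc.const α 1) (SimpleFunc.const α 0)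

theorem ind_mem (A : MSet α) {x : α} (h : x ∈ A.1) : ind A x = 1 := by
  classical simp [ind, h]

theorem ind_not_mem (A : MSet α) {x : α} (h : x ∉ A.1) : ind A x = 0 := by
  classical simp [ind, h]

theorem simpleInt_comp {β : Type*} [MeasurableSpace β] {P : MSet α → unitInterval}
    (hP : IsFAP P) (μ : Measure β) [IsFiniteMeasure μ] (p : α → β) (hp : Measurable p)
    (h : ∀ B (hB : MeasurableSet B), (P ⟨p ⁻¹' B, hp hB⟩ : ℝ) = (μ B).toReal)
    (g : SimpleFunc β ℝ) : simpleInt P (g.comp p hp) = ∫ x, g x ∂μ := by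
  rw [SimpleFunc.integral_eq_sum _ (sf_integrable μ g)]
  unfold simpleInt
  have key : ∀ y, (P ⟨(⇑(g.comp p hp)) ⁻¹' {y}, (g.comp p hp).measurableSet_fiber y⟩ : ℝ)
      = μ.real (g ⁻¹' {y}) := fun y => h _ (g.measurableSet_fiber y)
  refine (Finset.sum_subset (s₂ := g.range) (SimpleFunc.range_comp_subset_range g hp) ?_).trans ?_
  · intro y _ hy
    rw [fap_empty hP, mul_zero]
    ext x
    simp only [mem_preimage, mem_singleton_iff, mem_empty_iff_false, iff_false]
    intro hx
    exact hy (by rw [SimpleFunc.mem_range]; exact ⟨x, hx⟩)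
  · refine Finset.sum_congr rfl fun y _ => ?_
    rw [key, smul_eq_mul, mul_comm]

variable {n : ℕ} {Ω : Fin n → Type*} [∀ i, MeasurableSpace (Ω i)]

/-- the map `(f_i) ↦ ⊕ f_i` on simple functions -/
noncomputable def Phi : (∀ i, SimpleFunc (Ω i) ℝ) →ₗ[ℝ] SimpleFunc (∀ i, Ω i) ℝ where
  toFun g := ∑ i, (g i).comp (fun ω => ω i) (measurable_pi_apply i)
  map_add' g h := by
    ext x
    simp [sf_sum_apply, Finset.sum_add_distrib]
  map_smul' c g := by
    ext x
    simp [sf_sum_apply, Finset.mul_sum]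

theorem Phi_apply (g : ∀ i, SimpleFunc (Ω i) ℝ) (ω : ∀ i, Ω i) :
    Phi g ω = ∑ i, g i (ω i) := by
  simp [Phi, sf_sum_apply]

/-- the functional `(f_i) ↦ ∑ μ_i(f_i)` -/
noncomputable def Lam (μ : ∀ i, Measure (Ω i)) [∀ i, IsProbabilityMeasure (μ i)] :
    (∀ i, SimpleFunc (Ω i) ℝ) →ₗ[ℝ] ℝ where
  toFun g := ∑ i, ∫ x, g i x ∂(μ i)
  map_add' g h := by
    rw [← Finset.sum_add_distrib]
    refine Finset.sum_congr rfl fun i _ => ?_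
    exact integral_add (sf_integrable (μ i) (g i)) (sf_integrable (μ i) (h i))
  map_smul' c g := by
    simp only [RingHom.id_apply, smul_eq_mul]
    rw [Finset.mul_sum]
    refine Finset.sum_congr rfl fun i _ => ?_
    exact integral_const_mul c _

theorem forward (μ : ∀ i, Measure (Ω i)) [∀ i, IsProbabilityMeasure (μ i)]
    {P : MSet (∀ i, Ω i) → unitInterval} (hP : P ∈ couplings μ)
    (f : ∀ i, Ω i → ℝ) (hf : ∀ i, Measurable (f i)) (hb : ∀ i, ∃ C, ∀ x, |f i x| ≤ C) :
    fapInt P (fun ω => ∑ i, f i (ω i)) ≤ ∑ i, ∫ x, f i x ∂(μ i) := by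
  refine le_of_forall_pos_le_add fun δ hδ => ?_
  obtain ⟨ε, hε, hεδ⟩ : ∃ ε : ℝ, 0 < ε ∧ n * ε ≤ δ := by
    refine ⟨δ / (n + 1), by positivity, ?_⟩
    rw [mul_div_assoc', div_le_iff₀ (by positivity)]
    nlinarith
  choose g hg using fun i => exists_upper (f i) (hf i) (hb i) ε hε
  choose C hC using hb
  have h1 : fapInt P (fun ω => ∑ i, f i (ω i)) ≤ simpleInt P (Phi g) := by
    refine fapInt_le hP.1 (C := ∑ i, C i) ?_ _ ?_
    · intro ω
      rw [← Finset.sum_neg_distrib]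
      exact Finset.sum_le_sum fun i _ => (abs_le.1 (hC i _)).1
    · intro ω
      rw [Phi_apply]
      exact Finset.sum_le_sum fun i _ => (hg i _).1
  have h2 : simpleInt P (Phi g) = ∑ i, ∫ x, g i x ∂(μ i) := by
    change simpleInt P (∑ i, (g i).comp (fun ω => ω i) (measurable_pi_apply i)) = _
    rw [simpleInt_sum hP.1]
    refine Finset.sum_congr rfl fun i _ => ?_
    exact simpleInt_comp hP.1 (μ i) _ _ (hP.2 i) (g i)
  have h3 : ∀ i, ∫ x, g i x ∂(μ i) ≤ (∫ x, f i x ∂(μ i)) + ε := by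
    intro i
    have hi : Integrable (f i) (μ i) :=
      Integrable.of_bound (hf i).aestronglyMeasurable (C i) (Filter.Eventually.of_forall (hC i))
    calc ∫ x, g i x ∂(μ i) ≤ ∫ x, (f i x + ε) ∂(μ i) :=
          integral_mono (sf_integrable _ _) (hi.add (integrable_const ε)) fun x => (hg i x).2
      _ = _ := by rw [integral_add hi (integrable_const ε)]; simp
  calc _ ≤ ∑ i, ((∫ x, f i x ∂(μ i)) + ε) := by
        rw [h2] at h1
        exact h1.trans (Finset.sum_le_sum fun i _ => h3 i)
    _ = (∑ i, ∫ x, f i x ∂(μ i)) + n * ε := by simp [Finset.sum_add_distrib]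
    _ ≤ _ := by linarith

/-- simple functions that are nonnegative `P`-a.s. -/
noncomputable def aeCone (P : MSet α → unitInterval) (hP : IsFAP P) :
    PointedCone ℝ (SimpleFunc α ℝ) where
  carrier := {s | (P ⟨{x | s x < 0}, neg_meas s⟩ : ℝ) = 0}
  zero_mem' := fap_empty hP _ (by simp)
  add_mem' := by
    intro s t hs ht
    have hs' : (P ⟨{x | s x < 0}, neg_meas s⟩ : ℝ) = 0 := hs
    have ht' : (P ⟨{x | t x < 0}, neg_meas t⟩ : ℝ) = 0 := ht
    have h1 := hP.2 ⟨{x | s x < 0}, neg_meas s⟩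
      ⟨{x | t x < 0} \ {x | s x < 0}, (neg_meas t).diff (neg_meas s)⟩ disjoint_sdiff_self_right
    have h2 := fap_mono hP ⟨{x | t x < 0} \ {x | s x < 0}, (neg_meas t).diff (neg_meas s)⟩
      ⟨{x | t x < 0}, neg_meas t⟩ diff_subset
    have h3 := fap_mono hP ⟨{x | (s + t) x < 0}, neg_meas (s + t)⟩
      ⟨{x | s x < 0} ∪ ({x | t x < 0} \ {x | s x < 0}),
        (neg_meas s).union ((neg_meas t).diff (neg_meas s))⟩ (by
        intro x hx
        simp only [mem_setOf_eq, SimpleFunc.coe_add, Pi.add_apply, mem_union, mem_diff] at hx ⊢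
        by_contra! hcon
        have := hcon.2
        by_cases ht : t x < 0
        · linarith [hcon.1, hcon.2 ht]
        · linarith [hcon.1])
    have h4 := (P ⟨{x | (s + t) x < 0}, neg_meas (s + t)⟩).2.1
    change (P ⟨{x | (s + t) x < 0}, neg_meas (s + t)⟩ : ℝ) = 0
    simp only at h1
    linarith
  smul_mem' := by
    intro c s hs
    have hs' : (P ⟨{x | s x < 0}, neg_meas s⟩ : ℝ) = 0 := hs
    have h3 := fap_mono hP ⟨{x | (c • s) x < 0}, neg_meas (c • s)⟩
      ⟨{x | s x < 0}, neg_meas s⟩ (by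
        intro x hx
        by_contra hcon
        have h5 : 0 ≤ s x := not_lt.1 hcon
        have h6 : c.1 * s x < 0 := hx
        exact absurd h6 (not_lt.2 (mul_nonneg c.2 h5)))
    have h4 := (P ⟨{x | (c • s) x < 0}, neg_meas (c • s)⟩).2.1
    change (P ⟨{x | (c • s) x < 0}, neg_meas (c • s)⟩ : ℝ) = 0
    linarith

theorem mem_aeCone {P : MSet α → unitInterval} (hP : IsFAP P) {s : SimpleFunc α ℝ} :
    s ∈ aeCone P hP ↔ (P ⟨{x | s x < 0}, neg_meas s⟩ : ℝ) = 0 := Iff.rfl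

theorem mem_aeCone_of_nonneg {P : MSet α → unitInterval} (hP : IsFAP P) {s : SimpleFunc α ℝ}
    (h : ∀ x, 0 ≤ s x) : s ∈ aeCone P hP :=
  fap_empty hP _ (by ext x; simpa using h x)

theorem Lam_nonneg (μ : ∀ i, Measure (Ω i)) [∀ i, IsProbabilityMeasure (μ i)]
    {P : MSet (∀ i, Ω i) → unitInterval} (hP : IsFAP P)
    (hd : DualCond μ {Q | IsFAP Q ∧ FapAC Q P}) (g : ∀ i, SimpleFunc (Ω i) ℝ)
    (hg : Phi g ∈ aeCone P hP) : 0 ≤ Lam μ g := by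
  have h := hd (fun i => g i) (fun i => (g i).measurable) (fun i => by
    obtain ⟨C, hC⟩ := (g i).exists_forall_norm_le
    exact ⟨C, hC⟩)
  have h0 : (0 : EReal) ≤ ((∑ i, ∫ x, g i x ∂(μ i) : ℝ) : EReal) := by
    refine le_trans ?_ h
    refine le_iInf₂ fun Q hQ => ?_
    have e : (fun ω : ∀ i, Ω i => ∑ i, g i (ω i)) = Phi g := by
      ext ω; rw [Phi_apply]
    rw [e]
    exact_mod_cast (simpleInt_nonneg hQ.1 _ (hQ.2 _ hg)).trans (le_fapInt hQ.1 _)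
  exact_mod_cast h0

theorem exists_functional (hn : 0 < n) (μ : ∀ i, Measure (Ω i)) [∀ i, IsProbabilityMeasure (μ i)]
    {P : MSet (∀ i, Ω i) → unitInterval} (hP : IsFAP P)
    (hd : DualCond μ {Q | IsFAP Q ∧ FapAC Q P}) :
    ∃ G : SimpleFunc (∀ i, Ω i) ℝ →ₗ[ℝ] ℝ, (∀ g, G (Phi g) = Lam μ g) ∧
      ∀ s ∈ aeCone P hP, 0 ≤ G s := by
  have hker : ∀ g : ∀ i, SimpleFunc (Ω i) ℝ, Phi g = 0 → Lam μ g = 0 := by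
    intro g hg
    refine le_antisymm ?_ (Lam_nonneg μ hP hd g (hg ▸ Submodule.zero_mem _))
    have := Lam_nonneg μ hP hd (-g) (by rw [map_neg, hg, neg_zero]; exact Submodule.zero_mem _)
    rw [map_neg] at this
    linarith
  obtain ⟨r, hr⟩ := (Phi (Ω := Ω)).rangeRestrict.exists_rightInverse_of_surjective
    (Phi (Ω := Ω)).range_rangeRestrict
  have hr' : ∀ y : LinearMap.range (Phi (Ω := Ω)), Phi (r y) = y := fun y =>
    congrArg Subtype.val (LinearMap.congr_fun hr y)
  obtain ⟨G, hG1, hG2⟩ := riesz_extension (aeCone P hP)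
    ⟨LinearMap.range (Phi (Ω := Ω)), (Lam μ).comp r⟩ (by
      intro x hx
      exact Lam_nonneg μ hP hd (r x) (by rw [hr']; exact hx)) (by
      intro y
      obtain ⟨C, hC⟩ := y.exists_forall_norm_le
      refine ⟨⟨Phi (fun i => if i = ⟨0, hn⟩ then SimpleFunc.const _ C else 0), ⟨_, rfl⟩⟩, ?_⟩
      refine mem_aeCone_of_nonneg hP fun x => ?_
      have e : ∀ i : Fin n, (if i = ⟨0, hn⟩ then SimpleFunc.const (Ω i) C else 0) (x i)
          = if i = ⟨0, hn⟩ then C else 0 := by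
        intro i; split_ifs <;> simp
      have := (abs_le.1 (hC x)).1
      simp only [SimpleFunc.coe_add, Pi.add_apply, Phi_apply, e, Finset.sum_ite_eq',
        Finset.mem_univ, if_true]
      linarith)
  refine ⟨G, fun g => ?_, hG2⟩
  have h1 := hG1 ⟨Phi g, ⟨g, rfl⟩⟩
  have h2 : G (Phi g) = Lam μ (r ⟨Phi g, ⟨g, rfl⟩⟩) := h1
  have h3 := hker (r ⟨Phi g, ⟨g, rfl⟩⟩ - g) (by rw [map_sub, hr', sub_self])
  rw [map_sub] at h3
  linarith

theorem backward (hn : 0 < n) (μ : ∀ i, Measure (Ω i)) [∀ i, IsProbabilityMeasure (μ i)]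
    {P : MSet (∀ i, Ω i) → unitInterval} (hP : IsFAP P)
    (hd : DualCond μ {Q | IsFAP Q ∧ FapAC Q P}) :
    (couplings μ ∩ {Q | IsFAP Q ∧ FapAC Q P}).Nonempty := by
  obtain ⟨G, hG1, hG2⟩ := exists_functional hn μ hP hd
  have hmarg : ∀ (i : Fin n) (B : Set (Ω i)) (hB : MeasurableSet B),
      G (ind ⟨(fun ω => ω i) ⁻¹' B, (measurable_pi_apply i) hB⟩) = (μ i B).toReal := by
    intro i B hB
    have e : ind ⟨(fun ω : ∀ i, Ω i => ω i) ⁻¹' B, (measurable_pi_apply i) hB⟩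
        = Phi (Pi.single i (ind ⟨B, hB⟩)) := by
      ext ω
      rw [Phi_apply, Finset.sum_eq_single i]
      · rw [Pi.single_eq_same]
        by_cases h : ω i ∈ B
        · rw [ind_mem _ (show ω ∈ (fun ω : ∀ i, Ω i => ω i) ⁻¹' B from h),
            ind_mem ⟨B, hB⟩ h]
        · rw [ind_not_mem _ (show ω ∉ (fun ω : ∀ i, Ω i => ω i) ⁻¹' B from h),
            ind_not_mem ⟨B, hB⟩ h]
      · intro j _ hj
        rw [Pi.single_eq_of_ne hj]; simp
      · simp
    rw [e, hG1]
    change ∑ j, ∫ x, (Pi.single i (ind ⟨B, hB⟩) : ∀ j, SimpleFunc (Ω j) ℝ) j x ∂(μ j) = _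
    rw [Finset.sum_eq_single i]
    · rw [Pi.single_eq_same]
      have : (fun x => ind ⟨B, hB⟩ x) = B.indicator (fun _ => (1 : ℝ)) := by
        ext x
        by_cases h : x ∈ B
        · rw [ind_mem ⟨B, hB⟩ h, indicator_of_mem h]
        · rw [ind_not_mem ⟨B, hB⟩ h, indicator_of_notMem h]
      rw [this, integral_indicator hB]
      simp [Measure.real]
    · intro j _ hj
      rw [Pi.single_eq_of_ne hj]; simp
    · simp
  have hadd : ∀ A B : MSet (∀ i, Ω i), Disjoint A.1 B.1 →
      G (ind ⟨A.1 ∪ B.1, A.2.union B.2⟩) = G (ind A) + G (ind B) := by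
    intro A B hAB
    rw [← map_add]
    congr 1
    ext x
    rw [SimpleFunc.coe_add, Pi.add_apply]
    by_cases hA : x ∈ A.1
    · rw [ind_mem _ (show x ∈ A.1 ∪ B.1 from Or.inl hA), ind_mem A hA,
        ind_not_mem B (Set.disjoint_left.1 hAB hA), add_zero]
    · by_cases hB : x ∈ B.1
      · rw [ind_mem _ (show x ∈ A.1 ∪ B.1 from Or.inr hB), ind_not_mem A hA, ind_mem B hB,
          zero_add]
      · rw [ind_not_mem _ (show x ∉ A.1 ∪ B.1 from fun h => h.elim hA hB), ind_not_mem A hA,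
          ind_not_mem B hB, zero_add]
  have hnn : ∀ A, 0 ≤ G (ind A) := fun A => hG2 _ (mem_aeCone_of_nonneg hP fun x => by
    by_cases h : x ∈ A.1
    · rw [ind_mem A h]; exact zero_le_one
    · rw [ind_not_mem A h])
  have huniv : G (ind ⟨Set.univ, MeasurableSet.univ⟩) = 1 := by
    have := hmarg ⟨0, hn⟩ Set.univ MeasurableSet.univ
    simpa using this
  have hle : ∀ A, G (ind A) ≤ 1 := by
    intro A
    have h := hadd A ⟨A.1ᶜ, A.2.compl⟩ disjoint_compl_right
    have e : (⟨A.1 ∪ A.1ᶜ, A.2.union A.2.compl⟩ : MSet (∀ i, Ω i))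
      = ⟨Set.univ, MeasurableSet.univ⟩ := Subtype.ext (union_compl_self _)
    simp only at h
    rw [e, huniv] at h
    linarith [hnn ⟨A.1ᶜ, A.2.compl⟩]
  have hQ : IsFAP (fun A => (⟨G (ind A), hnn A, hle A⟩ : unitInterval)) := ⟨huniv, hadd⟩
  refine ⟨fun A => ⟨G (ind A), hnn A, hle A⟩, ⟨hQ, hmarg⟩, hQ, ?_⟩
  intro A hA
  refine le_antisymm ?_ (hnn A)
  have := hG2 (-ind A) ((mem_aeCone hP).2 (by
    refine le_antisymm ?_ (P _).2.1
    refine le_trans (fap_mono hP _ A ?_) hA.le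
    intro x hx
    by_contra h
    have h1 : -(ind A x) < 0 := hx
    rw [ind_not_mem A h] at h1
    simp at h1))
  rw [map_neg] at this
  exact neg_nonneg.1 this

end helpers

end FATransport

namespace FATransport

/-- for `P* ∈ ℙ` and `𝒰 = {Q ∈ ℙ : Q ≪ P*}`, one has `M ∩ 𝒰 ≠ ∅` iff
`Σᵢ μᵢ(fᵢ) ≥ inf_{Q ∈ 𝒰} Q(⊕ᵢ fᵢ)` for all bounded measurable `fᵢ` (with `inf ∅ = ∞`). -/
theorem nonempty_iff_dualCond_ac
    {n : ℕ} (hn : 0 < n) {Ω : Fin n → Type*} [∀ i, MeasurableSpace (Ω i)]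
    (μ : ∀ i, Measure (Ω i)) [∀ i, IsProbabilityMeasure (μ i)]
    (Pstar : MSet (∀ i, Ω i) → unitInterval) (hPstar : IsFAP Pstar) :
    (couplings μ ∩ {Q | IsFAP Q ∧ FapAC Q Pstar}).Nonempty ↔
      DualCond μ {Q | IsFAP Q ∧ FapAC Q Pstar} := by
  constructor
  · rintro ⟨P, hPM, hPU⟩ f hf hb
    refine (iInf₂_le P hPU).trans ?_
    exact_mod_cast forward μ hPM f hf hb
  · exact backward hn μ hPstar

end FATransport
end
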